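/- Let φ : ℝ³ → [0,1] be radial, smooth, non-negative, ≢ 0, supported in {4/3 ≤ |ξ| ≤ 3/2}, and define f_n(x) = Γ_n ∑_{k=1}^n (1/k) 2^{−2k}(x₃ ∂₃φ̌)(2^k x), Γ_n = 1/ln ln n. Then the Fourier multiplier operator T with symbol ξ₃²(ξ₁²+ξ₂²)/|ξ|² satisfies |T f_n(0)| ≥ c₀ Γ_n ∑_{k=1}^n 1/k ≥ c₀ Γ_n ln n, where c₀ = 2(2π)^{-3/2} ∫_{ℝ³} (ξ₁²+ξ₂²)² ξ₃⁴ |ξ|^{−4} φ(ξ) dξ > 0. -/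

import Mathlib

open MeasureTheory Finset
open scoped FourierTransform

/-- `Γ_n = 1 / ln(ln n)`. -/
noncomputable def Gam (n : ℕ) : ℝ := 1 / Real.log (Real.log n)

/-- The (complex-valued) inverse Fourier transform of a real function on `ℝ³`. -/
noncomputable def phinv3 (φ : EuclideanSpace ℝ (Fin 3) → ℝ) :
    EuclideanSpace ℝ (Fin 3) → ℂ :=
  𝓕⁻ (fun ξ => (φ ξ : ℂ))

/-- `f_n(x) = Γ_n ∑_{k=1}^n (1/k) 2^{-2k} (x₃ ∂₃φ̌)(2^k x)`. -/
noncomputable def fCor (φ : EuclideanSpace ℝ (Fin 3) → ℝ) (n : ℕ) :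
    EuclideanSpace ℝ (Fin 3) → ℂ :=
  fun x => (Gam n : ℂ) * ∑ k ∈ Finset.Icc 1 n,
    (((1 / (k : ℝ)) * (2 : ℝ) ^ (-(2 * (k : ℤ))) * (((2 : ℝ) ^ k • x) 2) : ℝ) : ℂ) *
      fderiv ℝ (phinv3 φ) ((2 : ℝ) ^ k • x) (EuclideanSpace.single 2 1)

/-- The Fourier multiplier with symbol `ξ₃²(ξ₁²+ξ₂²)/|ξ|²`. -/
noncomputable def Tmult (f : EuclideanSpace ℝ (Fin 3) → ℂ) :
    EuclideanSpace ℝ (Fin 3) → ℂ :=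
  𝓕⁻ (fun ξ => (((ξ 2) ^ 2 * ((ξ 0) ^ 2 + (ξ 1) ^ 2) / ‖ξ‖ ^ 2 : ℝ) : ℂ) * 𝓕 f ξ)

/-!
The symbol `m(ξ) = ξ₃²(ξ₁² + ξ₂²)/|ξ|²` of `T` is homogeneous of degree two, so
`T(f(2ᵏ ·)) = 2²ᵏ (Tf)(2ᵏ ·)`: the weights `2⁻²ᵏ` in `f_n` cancel and
`T f_n(0) = Γ_n (∑ₖ 1/k) γ(0)` with `γ = T(x₃∂₃φ̌)`. Since `x₃∂₃φ̌` has Fourier transform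
`-∂₃(ξ₃φ)`, integration by parts gives
`γ(0) = ∫ ξ₃ ∂₃m φ = 2 ∫ ξ₃² ((ξ₁² + ξ₂²)/|ξ|²)² φ`.
The constant `c₀` has `ξ₃⁴` in place of `ξ₃²`, and a factor `(2π)^(-3/2)` which the normalization
`∫ exp(-2πi⟨x, ξ⟩) f(x) dx` of the Fourier transform does not produce. Nevertheless `c₀ ≤ γ(0)`,
because `ξ₃² ≤ (2π)^(3/2)` on the support of `φ`.
-/

open Module
open scoped SchwartzMap LineDeriv

section FourierMultiplier

variable {V F : Type*} [NormedAddCommGroup V] [InnerProductSpace ℝ V] [FiniteDimensional ℝ V]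
  [MeasurableSpace V] [BorelSpace V] [NormedAddCommGroup F] [NormedSpace ℂ F]

theorem fourier_comp_smul (f : V → F) {c : ℝ} (hc : c ≠ 0) (ξ : V) :
    𝓕 (fun x => f (c • x)) ξ = |(c ^ finrank ℝ V)⁻¹| • 𝓕 f (c⁻¹ • ξ) := by
  simp only [Real.fourier_eq]
  rw [← Measure.integral_comp_smul]
  simp only [inner_smul_left, inner_smul_right, conj_trivial, inv_mul_cancel_left₀ hc]

/-- The Fourier multiplier `f ↦ 𝓕⁻ (m · 𝓕 f)` with real symbol `m`, for functions on a
finite-dimensional inner product space. It is defined for all functions, with the convention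
that the integral of a non-integrable function is zero. -/
noncomputable def fourierMultiplier (m : V → ℝ) (f : V → F) : V → F :=
  𝓕⁻ (fun ξ => m ξ • 𝓕 f ξ)

theorem fourierMultiplier_apply (m : V → ℝ) (f : V → F) (x : V) :
    fourierMultiplier m f x = ∫ ξ, Real.fourierChar (inner ℝ ξ x) • m ξ • 𝓕 f ξ :=
  Real.fourierInv_eq _ _

theorem smul_fourier_comp_smul {m : V → ℝ} {c a : ℝ} (hc : c ≠ 0)
    (hm : ∀ ξ, m (c • ξ) = a * m ξ) (f : V → F) (ξ : V) :
    m ξ • 𝓕 (fun x => f (c • x)) ξ =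
      (a * |(c ^ finrank ℝ V)⁻¹|) • m (c⁻¹ • ξ) • 𝓕 f (c⁻¹ • ξ) := by
  rw [fourier_comp_smul f hc, ← smul_inv_smul₀ hc ξ, hm, smul_inv_smul₀ hc]
  simp only [smul_smul]
  ring_nf

theorem integrable_smul_fourier_comp_smul {m : V → ℝ} {c a : ℝ} (hc : c ≠ 0)
    (hm : ∀ ξ, m (c • ξ) = a * m ξ) {f : V → F} (hf : Integrable fun ξ => m ξ • 𝓕 f ξ) :
    Integrable fun ξ => m ξ • 𝓕 (fun x => f (c • x)) ξ := by
  simp only [smul_fourier_comp_smul hc hm]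
  exact (hf.comp_smul (inv_ne_zero hc)).smul (a * |(c ^ finrank ℝ V)⁻¹|)

theorem fourierMultiplier_comp_smul {m : V → ℝ} {c a : ℝ} (hc : c ≠ 0)
    (hm : ∀ ξ, m (c • ξ) = a * m ξ) (f : V → F) (x : V) :
    fourierMultiplier m (fun y => f (c • y)) x = a • fourierMultiplier m f (c • x) := by
  have hscale : |(c ^ finrank ℝ V)⁻¹| * |c ^ finrank ℝ V| = 1 := by
    rw [← abs_mul, inv_mul_cancel₀ (pow_ne_zero _ hc), abs_one]
  have hphase (ξ : V) : inner ℝ ξ x = inner ℝ (c⁻¹ • ξ) (c • x) := by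
    rw [inner_smul_left, inner_smul_right, conj_trivial, inv_mul_cancel_left₀ hc]
  simp only [fourierMultiplier_apply, smul_fourier_comp_smul hc hm]
  simp_rw [smul_comm (Real.fourierChar _) (a * _), hphase]
  rw [integral_smul, Measure.integral_comp_inv_smul volume
    (fun ξ => Real.fourierChar (inner ℝ ξ (c • x)) • m ξ • 𝓕 f ξ), smul_smul, mul_assoc,
    hscale, mul_one]

theorem fourierMultiplier_sum_smul {ι : Type*} (s : Finset ι) {m : V → ℝ} (a : ι → ℝ)
    {f : ι → V → F} (hf : ∀ k ∈ s, Integrable (f k))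
    (hmf : ∀ k ∈ s, Integrable fun ξ => m ξ • 𝓕 (f k) ξ) (x : V) :
    fourierMultiplier m (fun y => ∑ k ∈ s, a k • f k y) x =
      ∑ k ∈ s, a k • fourierMultiplier m (f k) x := by
  have hfourier (ξ : V) : 𝓕 (fun y => ∑ k ∈ s, a k • f k y) ξ = ∑ k ∈ s, a k • 𝓕 (f k) ξ := by
    simp only [Real.fourier_eq, Finset.smul_sum, smul_comm (Real.fourierChar _) (a _),
      ← integral_smul]
    exact integral_finsetSum s fun k hk =>
      ((Real.fourierIntegral_convergent_iff ξ).2 (hf k hk)).smul (a k)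
  simp only [fourierMultiplier_apply, hfourier, Finset.smul_sum, smul_comm (m _) (a _),
    smul_comm (Real.fourierChar _) (a _), ← integral_smul]
  refine integral_finsetSum s fun k hk => Integrable.smul (a k) ?_
  simpa using (Real.fourierIntegral_convergent_iff (-x)).2 (hmf k hk)

end FourierMultiplier

section Schwartz

theorem hasCompactSupport_of_norm_le {V E : Type*} [SeminormedAddCommGroup V] [ProperSpace V]
    [Zero E] {φ : V → E} {R : ℝ} (hφ : ∀ ξ, φ ξ ≠ 0 → ‖ξ‖ ≤ R) : HasCompactSupport φ :=
  .of_support_subset_isCompact (isCompact_closedBall 0 R) fun ξ hξ => by simpa using hφ ξ hξ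

variable {V F : Type*} [NormedAddCommGroup V] [NormedAddCommGroup F]

theorem integrable_smul_schwartzMap [NormedSpace ℝ V] [NormedSpace ℝ F] [MeasurableSpace V]
    [BorelSpace V] [SecondCountableTopology V] {μ : Measure V} [μ.HasTemperateGrowth]
    {m : V → ℝ} {C : ℝ} {p : ℕ} (hm : Measurable m) (hC : ∀ ξ, |m ξ| ≤ C * ‖ξ‖ ^ p)
    (g : 𝓢(V, F)) : Integrable (fun ξ => m ξ • g ξ) μ := by
  refine ((g.integrable_pow_mul μ p).const_mul C).mono'
    (hm.aestronglyMeasurable.smul g.continuous.aestronglyMeasurable) (.of_forall fun ξ => ?_)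
  rw [norm_smul, Real.norm_eq_abs, ← mul_assoc]
  gcongr
  exact hC ξ

/-- The component `f ↦ ⟪x, e⟫ ∂ₑf` of the Euler operator in the direction `e`; for `e = e₃` this
is the operator `x₃∂₃`. -/
noncomputable def eulerDeriv [InnerProductSpace ℝ V] [NormedSpace ℝ F] (e : V) (f : 𝓢(V, F)) :
    𝓢(V, F) :=
  SchwartzMap.smulLeftCLM F (inner ℝ · e) (∂_{e} f)

theorem eulerDeriv_apply [InnerProductSpace ℝ V] [NormedSpace ℝ F] (e : V) (f : 𝓢(V, F))
    (x : V) : eulerDeriv e f x = inner ℝ x e • fderiv ℝ f x e := by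
  rw [eulerDeriv, SchwartzMap.smulLeftCLM_apply_apply (by fun_prop),
    SchwartzMap.lineDerivOp_apply_eq_fderiv]

variable [InnerProductSpace ℝ V] [FiniteDimensional ℝ V] [MeasurableSpace V] [BorelSpace V]
  [NormedSpace ℂ F]

theorem eulerDeriv_fourierInv (e : V) (g : 𝓢(V, F)) :
    eulerDeriv e (𝓕⁻ g) = -𝓕⁻ (∂_{e} (SchwartzMap.smulLeftCLM F (inner ℝ · e) g)) := by
  have htg : (inner ℝ · e).HasTemperateGrowth := by fun_prop
  rw [eulerDeriv, SchwartzMap.lineDerivOp_fourierInv_eq, SchwartzMap.fourierInv_lineDerivOp_eq,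
    FourierTransform.fourierInv_smul, neg_smul, neg_neg]
  ext x
  simp only [SchwartzMap.smulLeftCLM_apply_apply htg, smul_apply, smul_comm (inner ℝ x e)]

theorem fourier_eulerDeriv_fourierInv [CompleteSpace F] (e : V) (g : 𝓢(V, F)) :
    𝓕 (eulerDeriv e (𝓕⁻ g)) = -∂_{e} (SchwartzMap.smulLeftCLM F (inner ℝ · e) g) := by
  rw [eulerDeriv_fourierInv, ← FourierTransform.fourierInv_neg,
    FourierTransform.fourier_fourierInv_eq]

theorem fourierMultiplier_eulerDeriv_fourierInv_zero [CompleteSpace F] {m : V → ℝ} {e : V}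
    {C C' : ℝ} {p q : ℕ} (hm : Differentiable ℝ m) (hC : ∀ ξ, |m ξ| ≤ C * ‖ξ‖ ^ p)
    (hC' : ∀ ξ, |fderiv ℝ m ξ e| ≤ C' * ‖ξ‖ ^ q) (g : 𝓢(V, F)) :
    fourierMultiplier m (eulerDeriv e (𝓕⁻ g)) 0 =
      ∫ ξ, (fderiv ℝ m ξ e * inner ℝ ξ e) • g ξ := by
  have hmeas : Measurable m := hm.continuous.measurable
  have hmeas' : Measurable fun ξ => fderiv ℝ m ξ e := measurable_fderiv_apply_const ℝ m e
  set h : 𝓢(V, F) := SchwartzMap.smulLeftCLM F (inner ℝ · e) g with hh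
  have hparts : ∫ ξ, m ξ • fderiv ℝ h ξ e = -∫ ξ, fderiv ℝ m ξ e • h ξ := by
    refine integral_smul_fderiv_eq_neg_fderiv_smul_of_integrable
      (integrable_smul_schwartzMap hmeas' hC' h) ?_ (integrable_smul_schwartzMap hmeas hC h)
      (fun ξ _ => hm ξ) fun ξ _ => h.differentiableAt
    simpa only [SchwartzMap.lineDerivOp_apply_eq_fderiv] using
      integrable_smul_schwartzMap hmeas hC (∂_{e} h)
  calc fourierMultiplier m (eulerDeriv e (𝓕⁻ g)) 0
      = ∫ ξ, m ξ • 𝓕 (eulerDeriv e (𝓕⁻ g)) ξ := by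
        simp [fourierMultiplier_apply, SchwartzMap.fourier_coe]
    _ = -∫ ξ, m ξ • fderiv ℝ h ξ e := by
        simp only [fourier_eulerDeriv_fourierInv, ← hh, neg_apply,
          SchwartzMap.lineDerivOp_apply_eq_fderiv, smul_neg, integral_neg]
    _ = ∫ ξ, (fderiv ℝ m ξ e * inner ℝ ξ e) • g ξ := by
        rw [hparts, neg_neg]
        simp only [hh, SchwartzMap.smulLeftCLM_apply_apply
          (show (inner ℝ · e).HasTemperateGrowth by fun_prop), smul_smul]

end Schwartz

section Positivity

theorem ae_apply_ne_zero {V : Type*} [NormedAddCommGroup V] [NormedSpace ℝ V]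
    [FiniteDimensional ℝ V] [MeasurableSpace V] [BorelSpace V] (μ : Measure V)
    [μ.IsAddHaarMeasure] {l : V →ₗ[ℝ] ℝ} (hl : l ≠ 0) : ∀ᵐ x ∂μ, l x ≠ 0 := by
  have hker : {x | ¬l x ≠ 0} = LinearMap.ker l := by
    ext x
    simp
  rw [ae_iff, hker]
  exact Measure.addHaar_submodule μ _ (mt LinearMap.ker_eq_top.1 hl)

theorem integral_mul_pos_of_continuous {X : Type*} [TopologicalSpace X] [MeasurableSpace X]
    {μ : Measure X} [μ.IsOpenPosMeasure] {w φ : X → ℝ} (hw : ∀ᵐ x ∂μ, 0 < w x)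
    (hφc : Continuous φ) (hφ0 : 0 ≤ φ) (hne : φ ≠ 0) (hint : Integrable (fun x => w x * φ x) μ) :
    0 < ∫ x, w x * φ x ∂μ := by
  have hnonneg : 0 ≤ᵐ[μ] fun x => w x * φ x :=
    hw.mono fun x hx => mul_nonneg hx.le (hφ0 x)
  rw [integral_pos_iff_support_of_nonneg_ae hnonneg hint]
  calc 0 < μ (Function.support φ) :=
        hφc.isOpen_support.measure_pos μ (Function.support_nonempty_iff.2 hne)
    _ ≤ μ (Function.support fun x => w x * φ x) :=
        measure_mono_ae (hw.mono fun x hx hφx => mul_ne_zero hx.ne' hφx)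

end Positivity

section PolarAngle

local notation "ℝ³" => EuclideanSpace ℝ (Fin 3)
local notation "e₃" => (EuclideanSpace.single 2 1 : EuclideanSpace ℝ (Fin 3))

theorem norm_sq_eq_add (ξ : ℝ³) : ‖ξ‖ ^ 2 = ξ 0 ^ 2 + ξ 1 ^ 2 + ξ 2 ^ 2 := by
  rw [EuclideanSpace.real_norm_sq_eq, Fin.sum_univ_three]

/-- The squared sine `(ξ₁² + ξ₂²) / |ξ|²` of the angle between `ξ` and the third axis, with value
`0` at the origin. -/
noncomputable def sinSqPolar (ξ : ℝ³) : ℝ := (ξ 0 ^ 2 + ξ 1 ^ 2) / ‖ξ‖ ^ 2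

theorem sinSqPolar_nonneg (ξ : ℝ³) : 0 ≤ sinSqPolar ξ := by
  unfold sinSqPolar
  positivity

theorem sinSqPolar_le_one (ξ : ℝ³) : sinSqPolar ξ ≤ 1 :=
  div_le_one_of_le₀ (norm_sq_eq_add ξ ▸ le_add_of_nonneg_right (sq_nonneg _)) (by positivity)

theorem sinSqPolar_pos {ξ : ℝ³} (hξ : ξ 0 ≠ 0) : 0 < sinSqPolar ξ := by
  have : ξ ≠ 0 := by rintro rfl; exact hξ rfl
  unfold sinSqPolar
  positivity

theorem sinSqPolar_smul {c : ℝ} (hc : c ≠ 0) (ξ : ℝ³) : sinSqPolar (c • ξ) = sinSqPolar ξ := by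
  simp only [sinSqPolar, PiLp.smul_apply, smul_eq_mul, norm_smul, Real.norm_eq_abs, mul_pow,
    sq_abs, ← mul_add]
  exact mul_div_mul_left _ _ (pow_ne_zero 2 hc)

theorem measurable_sinSqPolar : Measurable sinSqPolar := by
  unfold sinSqPolar
  fun_prop

theorem abs_pow_mul_sinSqPolar_pow_le (p q : ℕ) (ξ : ℝ³) :
    |ξ 2 ^ p * sinSqPolar ξ ^ q| ≤ ‖ξ‖ ^ p := by
  have h₂ : |ξ 2| ≤ ‖ξ‖ := PiLp.norm_apply_le ξ 2
  rw [abs_mul, abs_pow, abs_of_nonneg (pow_nonneg (sinSqPolar_nonneg ξ) q)]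
  calc |ξ 2| ^ p * sinSqPolar ξ ^ q ≤ ‖ξ‖ ^ p * 1 := by
        gcongr
        · exact pow_nonneg (sinSqPolar_nonneg ξ) q
        · exact pow_le_one₀ (sinSqPolar_nonneg ξ) (sinSqPolar_le_one ξ)
    _ = ‖ξ‖ ^ p := mul_one _

/-- The symbol `ξ₃² (ξ₁² + ξ₂²) / |ξ|²` of the operator `T`. -/
noncomputable def polarSymbol (ξ : ℝ³) : ℝ := ξ 2 ^ 2 * sinSqPolar ξ

theorem Tmult_eq_fourierMultiplier (f : ℝ³ → ℂ) : Tmult f = fourierMultiplier polarSymbol f := by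
  simp only [Tmult, fourierMultiplier, polarSymbol, sinSqPolar, mul_div_assoc, Complex.real_smul]

theorem polarSymbol_smul {c : ℝ} (hc : c ≠ 0) (ξ : ℝ³) :
    polarSymbol (c • ξ) = c ^ 2 * polarSymbol ξ := by
  simp only [polarSymbol, sinSqPolar_smul hc, PiLp.smul_apply, smul_eq_mul, mul_pow, mul_assoc]

theorem abs_polarSymbol_le (ξ : ℝ³) : |polarSymbol ξ| ≤ ‖ξ‖ ^ 2 := by
  simpa [polarSymbol] using abs_pow_mul_sinSqPolar_pow_le 2 1 ξ

theorem hasFDerivAt_polarSymbol_zero : HasFDerivAt polarSymbol (0 : ℝ³ →L[ℝ] ℝ) 0 := by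
  refine Asymptotics.IsBigO.hasFDerivAt (n := 2) (.of_bound 1 (.of_forall fun ξ => ?_)) one_lt_two
  simpa using abs_polarSymbol_le ξ

theorem differentiable_polarSymbol : Differentiable ℝ polarSymbol := by
  intro ξ
  rcases eq_or_ne ξ 0 with rfl | hξ
  · exact hasFDerivAt_polarSymbol_zero.differentiableAt
  · have hnorm : ‖ξ‖ ^ 2 ≠ 0 := by simpa using hξ
    rw [norm_sq_eq_add] at hnorm
    unfold polarSymbol sinSqPolar
    simp only [norm_sq_eq_add]
    fun_prop (disch := assumption)

theorem fderiv_polarSymbol_apply (ξ : ℝ³) :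
    fderiv ℝ polarSymbol ξ e₃ = 2 * (ξ 2 * sinSqPolar ξ ^ 2) := by
  rcases eq_or_ne ξ 0 with rfl | hξ
  · simp [hasFDerivAt_polarSymbol_zero.fderiv]
  have hnorm : ξ 0 ^ 2 + ξ 1 ^ 2 + ξ 2 ^ 2 ≠ 0 := by
    rw [← norm_sq_eq_add]
    simpa using hξ
  have hline : (fun t : ℝ => polarSymbol (ξ + t • e₃)) = fun t =>
      (ξ 2 + t) ^ 2 * ((ξ 0 ^ 2 + ξ 1 ^ 2) / (ξ 0 ^ 2 + ξ 1 ^ 2 + (ξ 2 + t) ^ 2)) := by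
    ext t
    simp [polarSymbol, sinSqPolar, norm_sq_eq_add]
  have hsq : HasDerivAt (fun t : ℝ => (ξ 2 + t) ^ 2) (2 * ξ 2) 0 := by
    simpa using ((hasDerivAt_id' (0 : ℝ)).const_add (ξ 2)).fun_pow 2
  have hquot := hsq.fun_mul ((hasDerivAt_const (0 : ℝ) (ξ 0 ^ 2 + ξ 1 ^ 2)).fun_div
    (hsq.const_add (ξ 0 ^ 2 + ξ 1 ^ 2)) (by simpa using hnorm))
  rw [← (differentiable_polarSymbol ξ).lineDeriv_eq_fderiv, lineDeriv, hline]
  refine hquot.deriv.trans ?_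
  simp only [sinSqPolar, norm_sq_eq_add, add_zero]
  field_simp
  ring

theorem abs_fderiv_polarSymbol_apply_le (ξ : ℝ³) :
    |fderiv ℝ polarSymbol ξ e₃| ≤ 2 * ‖ξ‖ := by
  rw [fderiv_polarSymbol_apply, abs_mul, abs_two]
  gcongr
  simpa using abs_pow_mul_sinSqPolar_pow_le 1 2 ξ

/-- The moment `∫ ξ₃ᵖ ((ξ₁² + ξ₂²) / |ξ|²)² φ(ξ) dξ`: the constant `c₀` is a multiple of the
fourth one and `T(x₃∂₃φ̌)(0)` of the second one. -/
noncomputable def polarMoment (p : ℕ) (φ : ℝ³ → ℝ) : ℝ :=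
  ∫ ξ, ξ 2 ^ p * sinSqPolar ξ ^ 2 * φ ξ

theorem integrable_polarMoment (p : ℕ) (φ : 𝓢(ℝ³, ℝ)) :
    Integrable fun ξ : ℝ³ => ξ 2 ^ p * sinSqPolar ξ ^ 2 * φ ξ :=
  integrable_smul_schwartzMap (m := fun ξ : ℝ³ => ξ 2 ^ p * sinSqPolar ξ ^ 2)
    (.mul (by fun_prop) (measurable_sinSqPolar.pow_const 2))
    (fun ξ => (abs_pow_mul_sinSqPolar_pow_le p 2 ξ).trans_eq (one_mul _).symm) φ

theorem polarMoment_pos {p : ℕ} (hp : Even p) {φ : 𝓢(ℝ³, ℝ)} (hφ0 : ∀ ξ, 0 ≤ φ ξ)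
    (hne : φ ≠ 0) : 0 < polarMoment p φ := by
  have hcoord (i : Fin 3) : ∀ᵐ ξ : ℝ³, ξ i ≠ 0 := by
    refine ae_apply_ne_zero volume (l := (EuclideanSpace.proj i : ℝ³ →L[ℝ] ℝ).toLinearMap) ?_
    intro h
    simpa using LinearMap.congr_fun h (EuclideanSpace.single i 1)
  refine integral_mul_pos_of_continuous ?_ φ.continuous hφ0 (DFunLike.coe_injective.ne hne)
    (integrable_polarMoment p φ)
  filter_upwards [hcoord 0, hcoord 2] with ξ h₀ h₂
  exact mul_pos (hp.pow_pos h₂) (pow_pos (sinSqPolar_pos h₀) 2)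

theorem polarMoment_add_two_le {p : ℕ} (hp : Even p) {φ : 𝓢(ℝ³, ℝ)} (hφ0 : ∀ ξ, 0 ≤ φ ξ)
    {R : ℝ} (hsupp : ∀ ξ, φ ξ ≠ 0 → ξ 2 ^ 2 ≤ R) :
    polarMoment (p + 2) φ ≤ R * polarMoment p φ := by
  rw [polarMoment, polarMoment, ← integral_const_mul]
  refine integral_mono (integrable_polarMoment (p + 2) φ)
    ((integrable_polarMoment p φ).const_mul R) fun ξ => ?_
  have hnonneg : 0 ≤ ξ 2 ^ p * sinSqPolar ξ ^ 2 * φ ξ :=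
    mul_nonneg (mul_nonneg (hp.pow_nonneg _) (sq_nonneg _)) (hφ0 ξ)
  rcases eq_or_ne (φ ξ) 0 with h | h
  · simp [h]
  · calc ξ 2 ^ (p + 2) * sinSqPolar ξ ^ 2 * φ ξ
        = ξ 2 ^ 2 * (ξ 2 ^ p * sinSqPolar ξ ^ 2 * φ ξ) := by ring
      _ ≤ R * (ξ 2 ^ p * sinSqPolar ξ ^ 2 * φ ξ) :=
        mul_le_mul_of_nonneg_right (hsupp ξ h) hnonneg

/-- The inverse Fourier transform `φ̌` of a real Schwartz function, as a complex Schwartz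
function. -/
noncomputable def schwartzPhinv3 (φ : 𝓢(ℝ³, ℝ)) : 𝓢(ℝ³, ℂ) :=
  𝓕⁻ (φ.postcompCLM Complex.ofRealCLM)

theorem coe_schwartzPhinv3 (φ : 𝓢(ℝ³, ℝ)) : ⇑(schwartzPhinv3 φ) = phinv3 φ :=
  SchwartzMap.fourierInv_coe _

theorem fCor_eq_sum (φ : 𝓢(ℝ³, ℝ)) (n : ℕ) :
    fCor φ n = fun x => ∑ k ∈ Icc 1 n, (Gam n * (1 / k) * (((2 : ℝ) ^ k) ^ 2)⁻¹) •
      eulerDeriv e₃ (schwartzPhinv3 φ) ((2 : ℝ) ^ k • x) := by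
  ext x
  rw [fCor, mul_sum]
  refine sum_congr rfl fun k _ => ?_
  have hpow : (2 : ℝ) ^ (-(2 * (k : ℤ))) = (((2 : ℝ) ^ k) ^ 2)⁻¹ := by
    rw [zpow_neg, mul_comm, zpow_mul, zpow_natCast, zpow_ofNat]
  rw [eulerDeriv_apply, coe_schwartzPhinv3, EuclideanSpace.inner_single_right, hpow]
  simp only [Complex.real_smul, conj_trivial, one_mul]
  push_cast
  ring

theorem fourierMultiplier_polarSymbol_eulerDeriv_zero (φ : 𝓢(ℝ³, ℝ)) :
    fourierMultiplier polarSymbol (eulerDeriv e₃ (schwartzPhinv3 φ)) 0 =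
      ((2 * polarMoment 2 φ : ℝ) : ℂ) := by
  rw [schwartzPhinv3, fourierMultiplier_eulerDeriv_fourierInv_zero (C := 1) (p := 2) (q := 1)
    differentiable_polarSymbol (by simpa using abs_polarSymbol_le)
    (by simpa using abs_fderiv_polarSymbol_apply_le), polarMoment, ← integral_const_mul,
    ← integral_complex_ofReal]
  refine integral_congr_ae (.of_forall fun ξ => ?_)
  simp only [fderiv_polarSymbol_apply, EuclideanSpace.inner_single_right, conj_trivial, one_mul,
    SchwartzMap.postcompCLM_apply, Complex.ofRealCLM_apply, Complex.real_smul]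
  push_cast
  ring

theorem Tmult_fCor_zero (φ : 𝓢(ℝ³, ℝ)) (n : ℕ) :
    Tmult (fCor φ n) 0 =
      ((2 * polarMoment 2 φ * Gam n * ∑ k ∈ Icc 1 n, (1 : ℝ) / k : ℝ) : ℂ) := by
  set γ : 𝓢(ℝ³, ℂ) := eulerDeriv e₃ (schwartzPhinv3 φ) with hγ
  have htwo (k : ℕ) : (2 : ℝ) ^ k ≠ 0 := by positivity
  have hint : Integrable fun ξ => polarSymbol ξ • 𝓕 (γ : ℝ³ → ℂ) ξ :=
    integrable_smul_schwartzMap (C := 1) differentiable_polarSymbol.continuous.measurable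
      (by simpa using abs_polarSymbol_le) (𝓕 γ)
  rw [Tmult_eq_fourierMultiplier, fCor_eq_sum, ← hγ,
    fourierMultiplier_sum_smul (Icc 1 n) (f := fun k x => γ ((2 : ℝ) ^ k • x)) _
      (fun k _ => γ.integrable.comp_smul (htwo k))
      (fun k _ => integrable_smul_fourier_comp_smul (htwo k) (polarSymbol_smul (htwo k)) hint),
    mul_sum, Complex.ofReal_sum]
  refine sum_congr rfl fun k _ => ?_
  rw [fourierMultiplier_comp_smul (htwo k) (polarSymbol_smul (htwo k)), smul_zero, hγ,
    fourierMultiplier_polarSymbol_eulerDeriv_zero, smul_smul, Complex.real_smul,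
    ← Complex.ofReal_mul, inv_mul_cancel_right₀ (pow_ne_zero 2 (htwo k))]
  ring_nf

theorem Gam_nonneg {n : ℕ} (hn : 3 ≤ n) : 0 ≤ Gam n := by
  have hn' : (3 : ℝ) ≤ n := mod_cast hn
  have hlog : 1 ≤ Real.log n := by
    rw [Real.le_log_iff_exp_le (by linarith)]
    linarith [Real.exp_one_lt_three]
  exact one_div_nonneg.2 (Real.log_nonneg hlog)

theorem log_le_sum_one_div (n : ℕ) : Real.log n ≤ ∑ k ∈ Icc 1 n, (1 : ℝ) / k := by
  simpa [harmonic_eq_sum_Icc] using log_le_harmonic_floor n n.cast_nonneg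

/-- The constant `c₀` of the lower bound for `|T f_n(0)|`, for an arbitrary `φ`. -/
noncomputable def lowerConst (φ : ℝ³ → ℝ) : ℝ :=
  2 * (2 * Real.pi) ^ (-(3 : ℝ) / 2) *
    ∫ ξ : ℝ³,
      ((ξ 0) ^ 2 + (ξ 1) ^ 2) ^ 2 * (ξ 2) ^ 4 / ‖ξ‖ ^ 4 * φ ξ

theorem lowerConst_eq_polarMoment (φ : ℝ³ → ℝ) :
    lowerConst φ = 2 * (2 * Real.pi) ^ (-(3 : ℝ) / 2) * polarMoment 4 φ := by
  unfold lowerConst polarMoment sinSqPolar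
  congr with ξ
  ring

theorem lowerConst_le {φ : 𝓢(ℝ³, ℝ)} (hφ0 : ∀ ξ, 0 ≤ φ ξ)
    (hsupp : ∀ ξ, φ ξ ≠ 0 → ξ 2 ^ 2 ≤ (2 * Real.pi) ^ ((3 : ℝ) / 2)) :
    lowerConst φ ≤ 2 * polarMoment 2 φ := by
  have hpi : (2 * Real.pi) ^ (-(3 : ℝ) / 2) * (2 * Real.pi) ^ ((3 : ℝ) / 2) = 1 := by
    rw [← Real.rpow_add (by positivity), neg_div, neg_add_cancel, Real.rpow_zero]
  calc lowerConst φ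
      ≤ 2 * (2 * Real.pi) ^ (-(3 : ℝ) / 2) *
          ((2 * Real.pi) ^ ((3 : ℝ) / 2) * polarMoment 2 φ) := by
        rw [lowerConst_eq_polarMoment]
        gcongr
        exact polarMoment_add_two_le even_two hφ0 hsupp
    _ = 2 * polarMoment 2 φ := by rw [← mul_assoc, mul_assoc 2, hpi, mul_one]

theorem sq_apply_le_two_pi_rpow {ξ : ℝ³} (hξ : ‖ξ‖ ≤ 3 / 2) :
    ξ 2 ^ 2 ≤ (2 * Real.pi) ^ ((3 : ℝ) / 2) := by
  have hpi : 6 ≤ 2 * Real.pi := by linarith [Real.pi_gt_three]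
  calc ξ 2 ^ 2 ≤ ‖ξ‖ ^ 2 := sq_le_sq.2 (by simpa using PiLp.norm_apply_le ξ 2)
    _ ≤ (3 / 2) ^ 2 := by gcongr
    _ ≤ (2 * Real.pi) ^ (1 : ℝ) := by rw [Real.rpow_one]; linarith
    _ ≤ (2 * Real.pi) ^ ((3 : ℝ) / 2) :=
        Real.rpow_le_rpow_of_exponent_le (by linarith) (by norm_num)

theorem stmt14_general (φ : 𝓢(ℝ³, ℝ)) (hφ0 : ∀ ξ, 0 ≤ φ ξ)
    (hsupp : ∀ ξ, φ ξ ≠ 0 → ξ 2 ^ 2 ≤ (2 * Real.pi) ^ ((3 : ℝ) / 2)) (hne : φ ≠ 0) :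
    0 < lowerConst φ ∧
    ∀ n : ℕ, 3 ≤ n →
      lowerConst φ * Gam n * ∑ k ∈ Icc 1 n, (1 : ℝ) / k ≤ ‖Tmult (fCor φ n) 0‖ ∧
      lowerConst φ * Gam n * Real.log n ≤ lowerConst φ * Gam n * ∑ k ∈ Icc 1 n, (1 : ℝ) / k := by
  have hpos : 0 < lowerConst φ := by
    rw [lowerConst_eq_polarMoment]
    have := polarMoment_pos (by decide : Even 4) hφ0 hne
    positivity
  refine ⟨hpos, fun n hn => ?_⟩
  have hΓ : 0 ≤ Gam n := Gam_nonneg hn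
  refine ⟨?_, mul_le_mul_of_nonneg_left (log_le_sum_one_div n) (by positivity)⟩
  calc lowerConst φ * Gam n * ∑ k ∈ Icc 1 n, (1 : ℝ) / k
      ≤ 2 * polarMoment 2 φ * Gam n * ∑ k ∈ Icc 1 n, (1 : ℝ) / k := by
        gcongr
        exact lowerConst_le hφ0 hsupp
    _ ≤ ‖Tmult (fCor φ n) 0‖ := by
        rw [Tmult_fCor_zero, Complex.norm_real]
        exact Real.le_norm_self _

end PolarAngle

/-- for radial, smooth, non-negative `φ : ℝ³ → [0,1]` supported in the
annulus, not identically zero, the multiplier `T` with symbol `ξ₃²(ξ₁²+ξ₂²)/|ξ|²`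
satisfies `|T f_n(0)| ≥ c₀ Γ_n ∑_{k=1}^n 1/k ≥ c₀ Γ_n ln n`, with
`c₀ = 2(2π)^{-3/2} ∫ (ξ₁²+ξ₂²)² ξ₃⁴ |ξ|⁻⁴ φ dξ > 0`. -/
theorem stmt14 (φ : EuclideanSpace ℝ (Fin 3) → ℝ)
    (hsm : ContDiff ℝ (⊤ : ℕ∞) φ)
    (hrange : ∀ ξ, φ ξ ∈ Set.Icc (0 : ℝ) 1)
    (hradial : ∀ ξ η : EuclideanSpace ℝ (Fin 3), ‖ξ‖ = ‖η‖ → φ ξ = φ η)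
    (hsupp : ∀ ξ, φ ξ ≠ 0 → 4 / 3 ≤ ‖ξ‖ ∧ ‖ξ‖ ≤ 3 / 2)
    (hne : φ ≠ 0) :
    0 < 2 * (2 * Real.pi) ^ (-(3 : ℝ) / 2) *
        ∫ ξ : EuclideanSpace ℝ (Fin 3),
          ((ξ 0) ^ 2 + (ξ 1) ^ 2) ^ 2 * (ξ 2) ^ 4 / ‖ξ‖ ^ 4 * φ ξ ∧
    ∀ n : ℕ, 3 ≤ n →
      (2 * (2 * Real.pi) ^ (-(3 : ℝ) / 2) *
          ∫ ξ : EuclideanSpace ℝ (Fin 3),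
            ((ξ 0) ^ 2 + (ξ 1) ^ 2) ^ 2 * (ξ 2) ^ 4 / ‖ξ‖ ^ 4 * φ ξ) *
          Gam n * ∑ k ∈ Finset.Icc 1 n, (1 : ℝ) / k ≤ ‖Tmult (fCor φ n) 0‖ ∧
      (2 * (2 * Real.pi) ^ (-(3 : ℝ) / 2) *
          ∫ ξ : EuclideanSpace ℝ (Fin 3),
            ((ξ 0) ^ 2 + (ξ 1) ^ 2) ^ 2 * (ξ 2) ^ 4 / ‖ξ‖ ^ 4 * φ ξ) *
          Gam n * Real.log n ≤
        (2 * (2 * Real.pi) ^ (-(3 : ℝ) / 2) *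
          ∫ ξ : EuclideanSpace ℝ (Fin 3),
            ((ξ 0) ^ 2 + (ξ 1) ^ 2) ^ 2 * (ξ 2) ^ 4 / ‖ξ‖ ^ 4 * φ ξ) *
          Gam n * ∑ k ∈ Finset.Icc 1 n, (1 : ℝ) / k := by
  exact stmt14_general ((hasCompactSupport_of_norm_le fun ξ hξ => (hsupp ξ hξ).2).toSchwartzMap hsm)
    (fun ξ => (hrange ξ).1) (fun ξ hξ => sq_apply_le_two_pi_rpow (hsupp ξ hξ).2)
    fun h => hne (congrArg DFunLike.coe h)
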